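/- Robust positive invariance of the feasible set (Theorem 1): for every performance level γ ≥ γ_f, every x ∈ X_T^γ, every admissible pair (Φx, Φu) ∈ Π_T^γ(x) with first control action u₀ = Φu^{[0,0]} x (the top-left m×n block of Φu applied to x), and every disturbance w ∈ 𝒲, the successor state satisfies Ax + Bu₀ + w ∈ X_T^γ; in particular, X_T^γ is robust positively invariant under the receding horizon control law that applies the first action of any policy in Π_T^γ(x). -/

import Mathlib

open Matrix

noncomputable section

/-- Index type for stacked state / disturbance trajectories over horizon `T`:
block index in `Fin (T+1)`, coordinate in `Fin n`. -/
abbrev SIdx (n T : ℕ) := Fin (T + 1) × Fin n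

/-- Index type for stacked input trajectories over horizon `T`. -/
abbrev UIdx (m T : ℕ) := Fin T × Fin m

/-- The block-downshift operator `𝐙`. -/
def Zshift (n T : ℕ) : Matrix (SIdx n T) (SIdx n T) ℝ :=
  Matrix.of fun p q => if (p.1 : ℕ) = (q.1 : ℕ) + 1 ∧ p.2 = q.2 then (1 : ℝ) else 0

/-- `𝐀 = I_{T+1} ⊗ A`. -/
def bigA (n T : ℕ) (A : Matrix (Fin n) (Fin n) ℝ) : Matrix (SIdx n T) (SIdx n T) ℝ :=
  Matrix.of fun p q => if p.1 = q.1 then A p.2 q.2 else 0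

/-- `𝐁 = col(I_T ⊗ B, 0)`. -/
def bigB (n m T : ℕ) (B : Matrix (Fin n) (Fin m) ℝ) : Matrix (SIdx n T) (UIdx m T) ℝ :=
  Matrix.of fun p q => if (p.1 : ℕ) = (q.1 : ℕ) then B p.2 q.2 else 0

/-- `𝐐 = blkdiag(I_T ⊗ Q, 0)`. -/
def bigQ (n T : ℕ) (Q : Matrix (Fin n) (Fin n) ℝ) : Matrix (SIdx n T) (SIdx n T) ℝ :=
  Matrix.of fun p q => if p.1 = q.1 ∧ (p.1 : ℕ) < T then Q p.2 q.2 else 0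

/-- `𝐑 = I_T ⊗ R`. -/
def bigR (m T : ℕ) (R : Matrix (Fin m) (Fin m) ℝ) : Matrix (UIdx m T) (UIdx m T) ℝ :=
  Matrix.of fun p q => if p.1 = q.1 then R p.2 q.2 else 0

/-- `𝐅 = (I − 𝐙𝐀)⁻¹𝐙𝐁`. -/
def bigF (n m T : ℕ) (A : Matrix (Fin n) (Fin n) ℝ) (B : Matrix (Fin n) (Fin m) ℝ) :
    Matrix (SIdx n T) (UIdx m T) ℝ :=
  (1 - Zshift n T * bigA n T A)⁻¹ * (Zshift n T * bigB n m T B)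

/-- `𝐆 = (I − 𝐙𝐀)⁻¹`. -/
def bigG (n T : ℕ) (A : Matrix (Fin n) (Fin n) ℝ) : Matrix (SIdx n T) (SIdx n T) ℝ :=
  (1 - Zshift n T * bigA n T A)⁻¹

/-- The control cost `J_T(u, δ) = xᵀ𝐐x + uᵀ𝐑u` with `x = 𝐅u + 𝐆δ`. -/
def costJ (n m T : ℕ) (A : Matrix (Fin n) (Fin n) ℝ) (B : Matrix (Fin n) (Fin m) ℝ)
    (Q : Matrix (Fin n) (Fin n) ℝ) (R : Matrix (Fin m) (Fin m) ℝ)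
    (u : UIdx m T → ℝ) (δ : SIdx n T → ℝ) : ℝ :=
  let x := bigF n m T A B *ᵥ u + bigG n T A *ᵥ δ
  x ⬝ᵥ (bigQ n T Q *ᵥ x) + u ⬝ᵥ (bigR m T R *ᵥ u)

/-- `𝐏 = 𝐑 + 𝐅ᵀ𝐐𝐅`. -/
def bigP (n m T : ℕ) (A : Matrix (Fin n) (Fin n) ℝ) (B : Matrix (Fin n) (Fin m) ℝ)
    (Q : Matrix (Fin n) (Fin n) ℝ) (R : Matrix (Fin m) (Fin m) ℝ) :
    Matrix (UIdx m T) (UIdx m T) ℝ :=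
  bigR m T R + (bigF n m T A B)ᵀ * bigQ n T Q * bigF n m T A B

/-- The clairvoyant cost matrix `𝐂_T = 𝐆ᵀ𝐐(I + 𝐅𝐑⁻¹𝐅ᵀ𝐐)⁻¹𝐆`. -/
def Cmat (n m T : ℕ) (A : Matrix (Fin n) (Fin n) ℝ) (B : Matrix (Fin n) (Fin m) ℝ)
    (Q : Matrix (Fin n) (Fin n) ℝ) (R : Matrix (Fin m) (Fin m) ℝ) :
    Matrix (SIdx n T) (SIdx n T) ℝ :=
  (bigG n T A)ᵀ * bigQ n T Q *
    (1 + bigF n m T A B * (bigR m T R)⁻¹ * (bigF n m T A B)ᵀ * bigQ n T Q)⁻¹ * bigG n T A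

/-- Assemble `δ = col(x₀, w₀, …, w_{T−1})`. -/
def assemble (n T : ℕ) (x0 : Fin n → ℝ) (w : Fin T × Fin n → ℝ) : SIdx n T → ℝ :=
  fun p => if h : (p.1 : ℕ) = 0 then x0 p.2
    else w (⟨(p.1 : ℕ) - 1, by have := p.1.isLt; omega⟩, p.2)

/-- `𝐐̄ = blkdiag(I_T ⊗ Q, P)`. -/
def bigQbar (n T : ℕ) (Q P : Matrix (Fin n) (Fin n) ℝ) : Matrix (SIdx n T) (SIdx n T) ℝ :=
  Matrix.of fun p q =>
    if p.1 = q.1 then (if (p.1 : ℕ) < T then Q p.2 q.2 else P p.2 q.2) else 0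

/-- `𝐒̄ = blkdiag(𝐐̄, 𝐑)`. -/
def bigS (n m T : ℕ) (Q P : Matrix (Fin n) (Fin n) ℝ) (R : Matrix (Fin m) (Fin m) ℝ) :
    Matrix (SIdx n T ⊕ UIdx m T) (SIdx n T ⊕ UIdx m T) ℝ :=
  Matrix.fromBlocks (bigQbar n T Q P) 0 0 (bigR m T R)

/-- The regret `Reg_T(Φx, Φu, γ, δ)` for `δ = col(x₀, w)`:
`col(Φxδ, Φuδ)ᵀ𝐒̄ col(Φxδ, Φuδ) − δᵀ𝐂_Tδ − γ²wᵀw`. -/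
def RegT (n m T : ℕ) (A : Matrix (Fin n) (Fin n) ℝ) (B : Matrix (Fin n) (Fin m) ℝ)
    (Q : Matrix (Fin n) (Fin n) ℝ) (R : Matrix (Fin m) (Fin m) ℝ)
    (P : Matrix (Fin n) (Fin n) ℝ) (γ : ℝ)
    (Φx : Matrix (SIdx n T) (SIdx n T) ℝ) (Φu : Matrix (UIdx m T) (SIdx n T) ℝ)
    (x0 : Fin n → ℝ) (w : Fin T × Fin n → ℝ) : ℝ :=
  let δ := assemble n T x0 w
  let z : SIdx n T ⊕ UIdx m T → ℝ := Sum.elim (Φx *ᵥ δ) (Φu *ᵥ δ)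
  z ⬝ᵥ (bigS n m T Q P R *ᵥ z) - δ ⬝ᵥ (Cmat n m T A B Q R *ᵥ δ) - γ ^ 2 * (w ⬝ᵥ w)
/-- A pair of closed-loop responses is causal if both matrices are block lower
triangular (all blocks strictly above the block diagonal vanish). -/
def causalPair (n m T : ℕ) (Φx : Matrix (SIdx n T) (SIdx n T) ℝ)
    (Φu : Matrix (UIdx m T) (SIdx n T) ℝ) : Prop :=
  (∀ p q : SIdx n T, (p.1 : ℕ) < (q.1 : ℕ) → Φx p q = 0) ∧
  (∀ (p : UIdx m T) (q : SIdx n T), (p.1 : ℕ) < (q.1 : ℕ) → Φu p q = 0)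

/-- Achievability: `(I − 𝐙𝐀)Φx − 𝐙𝐁Φu = I`. -/
def achievablePair (n m T : ℕ) (A : Matrix (Fin n) (Fin n) ℝ) (B : Matrix (Fin n) (Fin m) ℝ)
    (Φx : Matrix (SIdx n T) (SIdx n T) ℝ) (Φu : Matrix (UIdx m T) (SIdx n T) ℝ) : Prop :=
  (1 - Zshift n T * bigA n T A) * Φx - Zshift n T * bigB n m T B * Φu = 1

/-- Safety: for every disturbance sequence with components in `𝒲`, the closed-loop state
and input trajectories satisfy `(x_t, u_t) ∈ 𝒵` for `t = 0, …, T−1` and `x_T ∈ 𝒵_f`. -/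
def safePair (n m T : ℕ) (W : Set (Fin n → ℝ))
    (Zc : Set ((Fin n → ℝ) × (Fin m → ℝ))) (Zf : Set (Fin n → ℝ))
    (x0 : Fin n → ℝ) (Φx : Matrix (SIdx n T) (SIdx n T) ℝ)
    (Φu : Matrix (UIdx m T) (SIdx n T) ℝ) : Prop :=
  ∀ w : Fin T × Fin n → ℝ, (∀ t : Fin T, (fun p => w (t, p)) ∈ W) →
    (∀ t : Fin T,
      ((fun p => (Φx *ᵥ assemble n T x0 w) (t.castSucc, p)),
        (fun q => (Φu *ᵥ assemble n T x0 w) (t, q))) ∈ Zc) ∧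
    (fun p => (Φx *ᵥ assemble n T x0 w) (Fin.last T, p)) ∈ Zf

/-- `Φ_w`: the last `Tn` columns of `col(Φx, Φu)`. -/
def stackW (n m T : ℕ) (Φx : Matrix (SIdx n T) (SIdx n T) ℝ)
    (Φu : Matrix (UIdx m T) (SIdx n T) ℝ) :
    Matrix (SIdx n T ⊕ UIdx m T) (Fin T × Fin n) ℝ :=
  Matrix.of fun r c =>
    Sum.elim (fun p => Φx p (c.1.succ, c.2)) (fun q => Φu q (c.1.succ, c.2)) r

/-- The linear matrix inequality `γ²I + 𝐂_T^{[1:T,1:T]} − Φ_wᵀ𝐒̄Φ_w ⪰ 0`. -/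
def lmiOK (n m T : ℕ) (A : Matrix (Fin n) (Fin n) ℝ) (B : Matrix (Fin n) (Fin m) ℝ)
    (Q : Matrix (Fin n) (Fin n) ℝ) (R : Matrix (Fin m) (Fin m) ℝ)
    (P : Matrix (Fin n) (Fin n) ℝ) (γ : ℝ)
    (Φx : Matrix (SIdx n T) (SIdx n T) ℝ) (Φu : Matrix (UIdx m T) (SIdx n T) ℝ) : Prop :=
  (γ ^ 2 • (1 : Matrix (Fin T × Fin n) (Fin T × Fin n) ℝ) +
    (Cmat n m T A B Q R).submatrix
      (fun c : Fin T × Fin n => ((c.1.succ : Fin (T + 1)), c.2))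
      (fun c : Fin T × Fin n => ((c.1.succ : Fin (T + 1)), c.2)) -
    (stackW n m T Φx Φu)ᵀ * bigS n m T Q P R * stackW n m T Φx Φu).PosSemidef

/-- Membership in `Π_T^γ(x₀)`: causal, achievable, safe, and satisfying the LMI. -/
def memPi (n m T : ℕ) (A : Matrix (Fin n) (Fin n) ℝ) (B : Matrix (Fin n) (Fin m) ℝ)
    (Q : Matrix (Fin n) (Fin n) ℝ) (R : Matrix (Fin m) (Fin m) ℝ)
    (P : Matrix (Fin n) (Fin n) ℝ) (W : Set (Fin n → ℝ))
    (Zc : Set ((Fin n → ℝ) × (Fin m → ℝ))) (Zf : Set (Fin n → ℝ))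
    (γ : ℝ) (x0 : Fin n → ℝ)
    (Φx : Matrix (SIdx n T) (SIdx n T) ℝ) (Φu : Matrix (UIdx m T) (SIdx n T) ℝ) : Prop :=
  causalPair n m T Φx Φu ∧ achievablePair n m T A B Φx Φu ∧
    safePair n m T W Zc Zf x0 Φx Φu ∧ lmiOK n m T A B Q R P γ Φx Φu

/-- The feasible set `X_T^γ = {x : Π_T^γ(x) ≠ ∅}`. -/
def Xset (n m T : ℕ) (A : Matrix (Fin n) (Fin n) ℝ) (B : Matrix (Fin n) (Fin m) ℝ)
    (Q : Matrix (Fin n) (Fin n) ℝ) (R : Matrix (Fin m) (Fin m) ℝ)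
    (P : Matrix (Fin n) (Fin n) ℝ) (W : Set (Fin n → ℝ))
    (Zc : Set ((Fin n → ℝ) × (Fin m → ℝ))) (Zf : Set (Fin n → ℝ))
    (γ : ℝ) : Set (Fin n → ℝ) :=
  {x | ∃ Φx Φu, memPi n m T A B Q R P W Zc Zf γ x Φx Φu}

section helpers

lemma quad_nonneg {k : Type*} [Fintype k] [DecidableEq k] {M : Matrix k k ℝ} (h : M.PosSemidef) (v : k → ℝ) :
    0 ≤ v ⬝ᵥ (M *ᵥ v) := by
  simpa using h.dotProduct_mulVec_nonneg v

lemma quad_symm {k : Type*} [Fintype k] [DecidableEq k] {M : Matrix k k ℝ} (h : M.IsHermitian) (v w : k → ℝ) :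
    v ⬝ᵥ (M *ᵥ w) = w ⬝ᵥ (M *ᵥ v) := by
  have : Mᵀ = M := by simpa [Matrix.IsHermitian, conjTranspose_eq_transpose_of_trivial] using h
  rw [dotProduct_mulVec, ← mulVec_transpose, this, dotProduct_comm]

lemma Zs_zero (n T : ℕ) (v : SIdx n T → ℝ) (p : Fin n) : (Zshift n T *ᵥ v) (0, p) = 0 := by
  simp [Zshift, mulVec, dotProduct]

lemma Zs_succ (n T : ℕ) (v : SIdx n T → ℝ) (t : Fin T) (p : Fin n) :
    (Zshift n T *ᵥ v) (t.succ, p) = v (t.castSucc, p) := by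
  simp only [Zshift, mulVec, dotProduct, of_apply]
  rw [Finset.sum_eq_single (t.castSucc, p)]
  · simp
  · rintro ⟨s, q⟩ - h
    have : ¬ ((t.succ : Fin (T+1)) : ℕ) = (s : ℕ) + 1 ∨ ¬ p = q := by
      by_contra hc
      push Not at hc
      apply h
      obtain ⟨h1, rfl⟩ := hc
      simp only [Fin.val_succ] at h1
      ext <;> simp; omega
    rw [if_neg (by tauto)]; simp
  · simp

lemma bA (n T : ℕ) (A : Matrix (Fin n) (Fin n) ℝ) (v : SIdx n T → ℝ) (t : Fin (T+1)) (p : Fin n) :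
    (bigA n T A *ᵥ v) (t, p) = (A *ᵥ fun q => v (t, q)) p := by
  simp only [bigA, mulVec, dotProduct, of_apply, Fintype.sum_prod_type]
  rw [Finset.sum_eq_single t]
  · simp
  · intro b _ hb; simp [hb.symm]
  · simp

lemma bB (n m T : ℕ) (B : Matrix (Fin n) (Fin m) ℝ) (v : UIdx m T → ℝ) (t : Fin T) (p : Fin n) :
    (bigB n m T B *ᵥ v) (t.castSucc, p) = (B *ᵥ fun q => v (t, q)) p := by
  simp only [bigB, mulVec, dotProduct, of_apply, Fintype.sum_prod_type]
  rw [Finset.sum_eq_single t]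
  · simp
  · intro b _ hb
    have : ¬ (t : ℕ) = b := fun h => hb (Fin.ext h.symm)
    simp [this]
  · simp

lemma bR (m T : ℕ) (R : Matrix (Fin m) (Fin m) ℝ) (v : UIdx m T → ℝ) (t : Fin T) (p : Fin m) :
    (bigR m T R *ᵥ v) (t, p) = (R *ᵥ fun q => v (t, q)) p := by
  simp only [bigR, mulVec, dotProduct, of_apply, Fintype.sum_prod_type]
  rw [Finset.sum_eq_single t]
  · simp
  · intro b _ hb; simp [hb.symm]
  · simp

lemma bQb (n T : ℕ) (Q P : Matrix (Fin n) (Fin n) ℝ) (v : SIdx n T → ℝ) (t : Fin (T+1)) (p : Fin n) :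
    (bigQbar n T Q P *ᵥ v) (t, p) = ((if (t : ℕ) < T then Q else P) *ᵥ fun q => v (t, q)) p := by
  simp only [bigQbar, mulVec, dotProduct, of_apply, Fintype.sum_prod_type]
  rw [Finset.sum_eq_single t]
  · by_cases h : (t : ℕ) < T <;> simp [h]
  · intro b _ hb; simp [hb.symm]
  · simp

lemma bQ_eq (n T : ℕ) (Q : Matrix (Fin n) (Fin n) ℝ) : bigQ n T Q = bigQbar n T Q 0 := by
  ext p q
  simp only [bigQ, bigQbar, of_apply]
  by_cases h : p.1 = q.1 <;> by_cases h' : (p.1 : ℕ) < T <;> simp only [h, h', true_and, and_true, and_false, if_true, if_false] <;> simp_all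

lemma quadR (m T : ℕ) (R : Matrix (Fin m) (Fin m) ℝ) (v : UIdx m T → ℝ) :
    v ⬝ᵥ (bigR m T R *ᵥ v) =
      ∑ t, (fun q => v (t, q)) ⬝ᵥ (R *ᵥ fun q => v (t, q)) := by
  simp only [dotProduct, Fintype.sum_prod_type, bR]

lemma quadQb (n T : ℕ) (Q P : Matrix (Fin n) (Fin n) ℝ) (v : SIdx n T → ℝ) :
    v ⬝ᵥ (bigQbar n T Q P *ᵥ v) =
      ∑ t : Fin T, (fun q => v (t.castSucc, q)) ⬝ᵥ (Q *ᵥ fun q => v (t.castSucc, q)) +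
      (fun q => v (Fin.last T, q)) ⬝ᵥ (P *ᵥ fun q => v (Fin.last T, q)) := by
  simp only [dotProduct, Fintype.sum_prod_type, bQb, Fin.sum_univ_castSucc]
  simp

/-- dynamics predicate -/
def Dyn (n m T : ℕ) (A : Matrix (Fin n) (Fin n) ℝ) (B : Matrix (Fin n) (Fin m) ℝ)
    (x d : SIdx n T → ℝ) (u : UIdx m T → ℝ) : Prop :=
  (∀ p, x (0, p) = d (0, p)) ∧ ∀ (t : Fin T) (p : Fin n), x (t.succ, p) =
    (A *ᵥ fun q => x (t.castSucc, q)) p + (B *ᵥ fun q => u (t, q)) p + d (t.succ, p)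

lemma dyn_iff (n m T : ℕ) (A : Matrix (Fin n) (Fin n) ℝ) (B : Matrix (Fin n) (Fin m) ℝ)
    (x d : SIdx n T → ℝ) (u : UIdx m T → ℝ) :
    (1 - Zshift n T * bigA n T A) *ᵥ x - (Zshift n T * bigB n m T B) *ᵥ u = d ↔
      Dyn n m T A B x d u := by
  simp only [sub_mulVec, one_mulVec, ← mulVec_mulVec]
  constructor
  · rintro rfl
    constructor
    · intro p; simp [-mulVec_mulVec, Zs_zero]
    · intro t p; simp [-mulVec_mulVec, Zs_succ, bA, bB]
  · rintro ⟨h0, h1⟩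
    ext ⟨t, p⟩
    refine Fin.cases ?_ (fun t => ?_) t
    · simp [-mulVec_mulVec, Zs_zero, h0]
    · simp [-mulVec_mulVec, Zs_succ, bA, bB, h1]; ring

lemma ZA_unit (n T : ℕ) (A : Matrix (Fin n) (Fin n) ℝ) :
    IsUnit (1 - Zshift n T * bigA n T A) := by
  rw [← Matrix.mulVec_injective_iff_isUnit]
  refine (injective_iff_map_eq_zero (Matrix.mulVecLin (1 - Zshift n T * bigA n T A))).2 ?_
  intro x hx
  have h := (dyn_iff n 0 T A 0 x 0 0).1 (by simpa [sub_mulVec] using hx)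
  ext ⟨t, p⟩
  induction t using Fin.induction generalizing p with
  | zero => simpa using h.1 p
  | succ t ih =>
    rw [h.2 t p]
    have : (fun q => x (t.castSucc, q)) = 0 := by ext q; simpa using ih q
    simp [this]

lemma FG_dyn (n m T : ℕ) (A : Matrix (Fin n) (Fin n) ℝ) (B : Matrix (Fin n) (Fin m) ℝ)
    (x d : SIdx n T → ℝ) (u : UIdx m T → ℝ) :
    x = bigF n m T A B *ᵥ u + bigG n T A *ᵥ d ↔ Dyn n m T A B x d u := by
  rw [← dyn_iff]
  have hu := (Matrix.isUnit_iff_isUnit_det _).1 (ZA_unit n T A)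
  simp only [bigF, bigG, ← mulVec_mulVec]
  rw [← mulVec_add]
  constructor
  · rintro rfl
    rw [mulVec_mulVec, mul_nonsing_inv _ hu]; simp
  · rintro rfl
    simp [mulVec_mulVec, nonsing_inv_mul _ hu]

lemma bigR_pd {m T : ℕ} {R : Matrix (Fin m) (Fin m) ℝ} (hR : R.PosDef) : (bigR m T R).PosDef := by
  refine Matrix.PosDef.of_dotProduct_mulVec_pos ?_ ?_
  · ext p q
    have := hR.1.apply p.2 q.2
    simp only [bigR, conjTranspose_apply, of_apply]
    by_cases h : p.1 = q.1
    · simpa [h] using this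
    · simp [h, Ne.symm h]
  · intro v hv
    simp only [star_trivial]
    rw [quadR]
    have : ∃ t, (fun q => v (t, q)) ≠ 0 := by
      by_contra hc; push Not at hc
      apply hv; ext ⟨t, p⟩; exact congrFun (hc t) p
    obtain ⟨t, ht⟩ := this
    refine Finset.sum_pos' (fun i _ => quad_nonneg hR.posSemidef _) ⟨t, Finset.mem_univ _, ?_⟩
    simpa using hR.dotProduct_mulVec_pos ht

lemma bigQb_psd {n T : ℕ} {Q P : Matrix (Fin n) (Fin n) ℝ} (hQ : Q.PosSemidef) (hP : P.PosSemidef) :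
    (bigQbar n T Q P).PosSemidef := by
  refine Matrix.PosSemidef.of_dotProduct_mulVec_nonneg ?_ ?_
  · ext p q
    have := hQ.1.apply p.2 q.2
    have := hP.1.apply p.2 q.2
    simp only [bigQbar, conjTranspose_apply, of_apply]
    by_cases h : p.1 = q.1
    · by_cases h' : (q.1 : ℕ) < T <;> simp_all
    · simp [h, Ne.symm h]
  · intro v
    simp only [star_trivial]
    rw [quadQb]
    exact add_nonneg (Finset.sum_nonneg fun i _ => quad_nonneg hQ _) (quad_nonneg hP _)

lemma C_min_abs {a b : Type*} [Fintype a] [DecidableEq a] [Fintype b] [DecidableEq b]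
    (F : Matrix a b ℝ) (Q : Matrix a a ℝ) (R : Matrix b b ℝ)
    (hQ : Q.PosSemidef) (hR : R.PosDef) (g : a → ℝ) :
    ∃ u : b → ℝ, 
      (F *ᵥ u + g) ⬝ᵥ (Q *ᵥ (F *ᵥ u + g)) + u ⬝ᵥ (R *ᵥ u) =
        g ⬝ᵥ ((Q * (1 + F * R⁻¹ * Fᵀ * Q)⁻¹) *ᵥ g) ∧ 
      ∀ u' : b → ℝ, g ⬝ᵥ ((Q * (1 + F * R⁻¹ * Fᵀ * Q)⁻¹) *ᵥ g) ≤ 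
        (F *ᵥ u' + g) ⬝ᵥ (Q *ᵥ (F *ᵥ u' + g)) + u' ⬝ᵥ (R *ᵥ u') := by
  have hRu : IsUnit R.det := (Matrix.isUnit_iff_isUnit_det _).1 hR.isUnit
  have hMu : IsUnit (1 + F * R⁻¹ * Fᵀ * Q) := by
    rw [← Matrix.mulVec_injective_iff_isUnit]
    refine (injective_iff_map_eq_zero (Matrix.mulVecLin (1 + F * R⁻¹ * Fᵀ * Q))).2 ?_
    intro v hv
    simp only [mulVecLin_apply, add_mulVec, one_mulVec, ← mulVec_mulVec] at hv
    have h1 : 0 ≤ (Fᵀ *ᵥ (Q *ᵥ v)) ⬝ᵥ (R⁻¹ *ᵥ (Fᵀ *ᵥ (Q *ᵥ v))) := quad_nonneg hR.inv.posSemidef _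
    have h2 := quad_nonneg hQ v
    have h3 : (Q *ᵥ v) ⬝ᵥ v + (Fᵀ *ᵥ (Q *ᵥ v)) ⬝ᵥ (R⁻¹ *ᵥ (Fᵀ *ᵥ (Q *ᵥ v))) = 0 := by
      have := congrArg (fun z => (Q *ᵥ v) ⬝ᵥ z) hv
      simp only [dotProduct_add, dotProduct_zero] at this
      rw [← this, dotProduct_mulVec _ F, ← mulVec_transpose]
    rw [dotProduct_comm] at h3
    have h4 : v ⬝ᵥ (Q *ᵥ v) = 0 := by linarith
    have h5 : Q *ᵥ v = 0 := (hQ.dotProduct_mulVec_zero_iff v).1 (by simpa using h4)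
    simpa [h5] using hv
  have hMd := (Matrix.isUnit_iff_isUnit_det _).1 hMu
  set M := 1 + F * R⁻¹ * Fᵀ * Q with hM
  set y := M⁻¹ *ᵥ g with hy
  have hMy : M *ᵥ y = g := by rw [hy, mulVec_mulVec, mul_nonsing_inv _ hMd, one_mulVec]
  set u := -(R⁻¹ *ᵥ (Fᵀ *ᵥ (Q *ᵥ y))) with hu
  have hx : F *ᵥ u + g = y := by
    rw [← hMy, hu, hM]
    simp only [add_mulVec, one_mulVec, ← mulVec_mulVec, mulVec_neg]
    abel
  have hRu' : R *ᵥ u = - (Fᵀ *ᵥ (Q *ᵥ y)) := by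
    rw [hu, mulVec_neg, mulVec_mulVec, mul_nonsing_inv _ hRu, one_mulVec]
  have key : ∀ v : b → ℝ, v ⬝ᵥ (R *ᵥ u) + (F *ᵥ v) ⬝ᵥ (Q *ᵥ y) = 0 := by
    intro v
    rw [hRu', dotProduct_neg, dotProduct_mulVec v, vecMul_transpose]
    simp
  have e : (F *ᵥ u + g) ⬝ᵥ (Q *ᵥ (F *ᵥ u + g)) + u ⬝ᵥ (R *ᵥ u) = g ⬝ᵥ ((Q * M⁻¹) *ᵥ g) := by
    rw [← mulVec_mulVec, ← hy]
    have := key u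
    rw [hx]
    have h6 : y ⬝ᵥ (Q *ᵥ y) = (F *ᵥ u) ⬝ᵥ (Q *ᵥ y) + g ⬝ᵥ (Q *ᵥ y) := by
      rw [← add_dotProduct, hx]
    linarith
  refine ⟨u, e, fun u' => ?_⟩
  rw [← e, hx]
  obtain ⟨v, rfl⟩ : ∃ v, u' = u + v := ⟨u' - u, by abel⟩
  have h7 : F *ᵥ (u + v) + g = y + F *ᵥ v := by rw [← hx, mulVec_add]; abel
  rw [h7]
  simp only [mulVec_add, dotProduct_add, add_dotProduct]
  have h8 := key v
  have h9 := quad_symm hQ.1 y (F *ᵥ v)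
  have h10 := quad_symm hR.1 u v
  have h11 := quad_nonneg hQ (F *ᵥ v)
  have h12 := quad_nonneg hR.posSemidef v
  linarith

lemma C_min (n m T : ℕ) (A : Matrix (Fin n) (Fin n) ℝ) (B : Matrix (Fin n) (Fin m) ℝ)
    (Q : Matrix (Fin n) (Fin n) ℝ) (R : Matrix (Fin m) (Fin m) ℝ)
    (hQ : Q.PosSemidef) (hR : R.PosDef) (d : SIdx n T → ℝ) :
    ∃ (x : SIdx n T → ℝ) (u : UIdx m T → ℝ), Dyn n m T A B x d u ∧
      x ⬝ᵥ (bigQbar n T Q 0 *ᵥ x) + u ⬝ᵥ (bigR m T R *ᵥ u) =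
        d ⬝ᵥ (Cmat n m T A B Q R *ᵥ d) ∧
      ∀ x' u', Dyn n m T A B x' d u' → d ⬝ᵥ (Cmat n m T A B Q R *ᵥ d) ≤
        x' ⬝ᵥ (bigQbar n T Q 0 *ᵥ x') + u' ⬝ᵥ (bigR m T R *ᵥ u') := by
  obtain ⟨u, h1, h2⟩ := C_min_abs (bigF n m T A B) (bigQbar n T Q 0) (bigR m T R)
    (bigQb_psd hQ .zero) (bigR_pd hR) (bigG n T A *ᵥ d)
  have hC : d ⬝ᵥ (Cmat n m T A B Q R *ᵥ d) = (bigG n T A *ᵥ d) ⬝ᵥ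
      ((bigQbar n T Q 0 * (1 + bigF n m T A B * (bigR m T R)⁻¹ * (bigF n m T A B)ᵀ *
        bigQbar n T Q 0)⁻¹) *ᵥ (bigG n T A *ᵥ d)) := by
    rw [Cmat, bQ_eq]
    simp only [Matrix.mul_assoc, ← mulVec_mulVec]
    rw [dotProduct_mulVec d, vecMul_transpose]
  refine ⟨_, u, (FG_dyn n m T A B _ d u).1 rfl, by rw [hC, h1], fun x' u' h => ?_⟩
  rw [hC, (FG_dyn n m T A B x' d u').2 h]
  exact h2 u'

lemma asm_zero (n T : ℕ) (x0 : Fin n → ℝ) (w : Fin T × Fin n → ℝ) (p : Fin n) :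
    assemble n T x0 w (0, p) = x0 p := by
  simp [assemble]

lemma asm_succ (n T : ℕ) (x0 : Fin n → ℝ) (w : Fin T × Fin n → ℝ) (t : Fin T) (p : Fin n) :
    assemble n T x0 w (t.succ, p) = w (t, p) := by
  simp [assemble]

lemma mulVec_asm {ι : Type*} (n T : ℕ) (M : Matrix ι (SIdx n T) ℝ) (w : Fin T × Fin n → ℝ) :
    M *ᵥ assemble n T 0 w =
      (M.submatrix id (fun c : Fin T × Fin n => ((c.1.succ : Fin (T + 1)), c.2))) *ᵥ w := by
  ext i
  simp only [mulVec, dotProduct, Fintype.sum_prod_type, Fin.sum_univ_succ, asm_zero, asm_succ]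
  simp

lemma asm_dot (n T : ℕ) (v : SIdx n T → ℝ) (w : Fin T × Fin n → ℝ) :
    assemble n T 0 w ⬝ᵥ v = w ⬝ᵥ (fun c : Fin T × Fin n => v (c.1.succ, c.2)) := by
  simp only [dotProduct, Fintype.sum_prod_type, Fin.sum_univ_succ, asm_zero, asm_succ]
  simp

lemma stackW_mulVec (n m T : ℕ) (Φx : Matrix (SIdx n T) (SIdx n T) ℝ)
    (Φu : Matrix (UIdx m T) (SIdx n T) ℝ) (w : Fin T × Fin n → ℝ) :
    stackW n m T Φx Φu *ᵥ w =
      Sum.elim (Φx *ᵥ assemble n T 0 w) (Φu *ᵥ assemble n T 0 w) := by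
  ext i
  rcases i with i | i
  · simp only [Sum.elim_inl, mulVec_asm]; rfl
  · simp only [Sum.elim_inr, mulVec_asm]; rfl

lemma lmi_iff (n m T : ℕ) (A : Matrix (Fin n) (Fin n) ℝ) (B : Matrix (Fin n) (Fin m) ℝ)
    (Q : Matrix (Fin n) (Fin n) ℝ) (R : Matrix (Fin m) (Fin m) ℝ)
    (P : Matrix (Fin n) (Fin n) ℝ) (γ : ℝ)
    (hQ : Q.PosSemidef) (hR : R.PosDef) (hP : P.PosDef)
    (Φx : Matrix (SIdx n T) (SIdx n T) ℝ) (Φu : Matrix (UIdx m T) (SIdx n T) ℝ) :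
    lmiOK n m T A B Q R P γ Φx Φu ↔
      ((Cmat n m T A B Q R).submatrix
      (fun c : Fin T × Fin n => ((c.1.succ : Fin (T + 1)), c.2))
      (fun c : Fin T × Fin n => ((c.1.succ : Fin (T + 1)), c.2))).IsHermitian ∧
      ∀ w : Fin T × Fin n → ℝ,
        (Φx *ᵥ assemble n T 0 w) ⬝ᵥ (bigQbar n T Q P *ᵥ (Φx *ᵥ assemble n T 0 w)) +
        (Φu *ᵥ assemble n T 0 w) ⬝ᵥ (bigR m T R *ᵥ (Φu *ᵥ assemble n T 0 w)) ≤
        γ ^ 2 * (w ⬝ᵥ w) +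
          assemble n T 0 w ⬝ᵥ (Cmat n m T A B Q R *ᵥ assemble n T 0 w) := by
  set Cs := (Cmat n m T A B Q R).submatrix
      (fun c : Fin T × Fin n => ((c.1.succ : Fin (T + 1)), c.2))
      (fun c : Fin T × Fin n => ((c.1.succ : Fin (T + 1)), c.2)) with hCs
  have hS : (bigS n m T Q P R).IsHermitian := by
    unfold bigS
    exact Matrix.IsHermitian.fromBlocks (bigQb_psd hQ hP.posSemidef).1 (by simp) (bigR_pd hR).1
  have hS2 : ((stackW n m T Φx Φu)ᵀ * bigS n m T Q P R * stackW n m T Φx Φu).IsHermitian := by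
    have := Matrix.isHermitian_conjTranspose_mul_mul (stackW n m T Φx Φu) hS
    simpa [conjTranspose_eq_transpose_of_trivial] using this
  have h1 : (γ ^ 2 • (1 : Matrix (Fin T × Fin n) (Fin T × Fin n) ℝ)).IsHermitian := by
    simp [Matrix.IsHermitian]
  have hq : ∀ w : Fin T × Fin n → ℝ,
      w ⬝ᵥ ((γ ^ 2 • (1 : Matrix (Fin T × Fin n) (Fin T × Fin n) ℝ) + Cs -
        (stackW n m T Φx Φu)ᵀ * bigS n m T Q P R * stackW n m T Φx Φu) *ᵥ w) =
      γ ^ 2 * (w ⬝ᵥ w) +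
          assemble n T 0 w ⬝ᵥ (Cmat n m T A B Q R *ᵥ assemble n T 0 w) -
       ((Φx *ᵥ assemble n T 0 w) ⬝ᵥ (bigQbar n T Q P *ᵥ (Φx *ᵥ assemble n T 0 w)) +
        (Φu *ᵥ assemble n T 0 w) ⬝ᵥ (bigR m T R *ᵥ (Φu *ᵥ assemble n T 0 w))) := by
    intro w
    rw [sub_mulVec, add_mulVec, dotProduct_sub, dotProduct_add]
    congr 1
    · congr 1
      · simp [smul_mulVec]
      · rw [mulVec_asm, asm_dot]; rfl
    · rw [Matrix.mul_assoc, ← mulVec_mulVec, ← mulVec_mulVec, dotProduct_mulVec w,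
        vecMul_transpose, stackW_mulVec, bigS, fromBlocks_mulVec]
      simp [dotProduct, Fintype.sum_sum_type]
  unfold lmiOK
  rw [← hCs]
  constructor
  · intro h
    refine ⟨?_, fun w => ?_⟩
    · have := (h.1.add hS2).sub h1
      convert this using 1
      abel
    · have := quad_nonneg h w
      rw [hq] at this
      linarith
  · rintro ⟨h, h'⟩
    refine Matrix.PosSemidef.of_dotProduct_mulVec_nonneg ((h1.add h).sub hS2) fun w => ?_
    rw [star_trivial, hq]
    linarith [h' w]

lemma ach_iff (n m T : ℕ) (A : Matrix (Fin n) (Fin n) ℝ) (B : Matrix (Fin n) (Fin m) ℝ)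
    (Φx : Matrix (SIdx n T) (SIdx n T) ℝ) (Φu : Matrix (UIdx m T) (SIdx n T) ℝ) :
    achievablePair n m T A B Φx Φu ↔ ∀ d, Dyn n m T A B (Φx *ᵥ d) d (Φu *ᵥ d) := by
  simp only [← dyn_iff, achievablePair]
  constructor
  · intro h d
    rw [mulVec_mulVec, mulVec_mulVec, ← sub_mulVec, h, one_mulVec]
  · intro h
    apply Matrix.ext_of_mulVec_single
    intro i
    have := h (Pi.single i 1)
    rw [mulVec_mulVec, mulVec_mulVec, ← sub_mulVec] at this
    rw [one_mulVec]
    exact this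

lemma memPi_intro (n m T : ℕ) (A : Matrix (Fin n) (Fin n) ℝ) (B : Matrix (Fin n) (Fin m) ℝ)
    (Q : Matrix (Fin n) (Fin n) ℝ) (R : Matrix (Fin m) (Fin m) ℝ)
    (P : Matrix (Fin n) (Fin n) ℝ) (W : Set (Fin n → ℝ))
    (Zc : Set ((Fin n → ℝ) × (Fin m → ℝ))) (Zf : Set (Fin n → ℝ))
    (γ : ℝ) (x0 : Fin n → ℝ)
    (hQ : Q.PosSemidef) (hR : R.PosDef) (hP : P.PosDef)
    (X : (SIdx n T → ℝ) →ₗ[ℝ] (SIdx n T → ℝ)) (U : (SIdx n T → ℝ) →ₗ[ℝ] (UIdx m T → ℝ))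
    (hcx : ∀ d (t : Fin (T+1)), (∀ (j : Fin (T+1)) p, (j : ℕ) ≤ t → d (j, p) = 0) →
      ∀ p, X d (t, p) = 0)
    (hcu : ∀ d (t : Fin T), (∀ (j : Fin (T+1)) p, (j : ℕ) ≤ t → d (j, p) = 0) →
      ∀ p, U d (t, p) = 0)
    (hdyn : ∀ d, Dyn n m T A B (X d) d (U d))
    (hsafe : ∀ w : Fin T × Fin n → ℝ, (∀ t : Fin T, (fun p => w (t, p)) ∈ W) →
      (∀ t : Fin T,
      ((fun p => (X (assemble n T x0 w)) (t.castSucc, p)),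
        (fun q => (U (assemble n T x0 w)) (t, q))) ∈ Zc) ∧
      (fun p => (X (assemble n T x0 w)) (Fin.last T, p)) ∈ Zf)
    (hC : ((Cmat n m T A B Q R).submatrix
      (fun c : Fin T × Fin n => ((c.1.succ : Fin (T + 1)), c.2))
      (fun c : Fin T × Fin n => ((c.1.succ : Fin (T + 1)), c.2))).IsHermitian)
    (hcost : ∀ w : Fin T × Fin n → ℝ,
        (X (assemble n T 0 w)) ⬝ᵥ (bigQbar n T Q P *ᵥ (X (assemble n T 0 w))) +
        (U (assemble n T 0 w)) ⬝ᵥ (bigR m T R *ᵥ (U (assemble n T 0 w))) ≤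
        γ ^ 2 * (w ⬝ᵥ w) +
          assemble n T 0 w ⬝ᵥ (Cmat n m T A B Q R *ᵥ assemble n T 0 w)) :
    x0 ∈ Xset n m T A B Q R P W Zc Zf γ := by
  refine ⟨LinearMap.toMatrix' X, LinearMap.toMatrix' U, ⟨?_, ?_⟩, ?_, ?_, ?_⟩
  · rintro ⟨t, p⟩ ⟨s, q⟩ h
    rw [LinearMap.toMatrix'_apply]
    apply hcx
    intro j p hj
    dsimp only at h hj
    have : j ≠ s := by rintro rfl; omega
    simp [this]
  · rintro ⟨t, p⟩ ⟨s, q⟩ h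
    rw [LinearMap.toMatrix'_apply]
    apply hcu
    intro j p hj
    dsimp only at h hj
    have : j ≠ s := by rintro rfl; omega
    simp [this]
  · rw [ach_iff]
    intro d
    simpa only [LinearMap.toMatrix'_mulVec] using hdyn d
  · simpa only [safePair, LinearMap.toMatrix'_mulVec] using hsafe
  · rw [lmi_iff _ _ _ _ _ _ _ _ _ hQ hR hP]
    simpa only [LinearMap.toMatrix'_mulVec] using ⟨hC, hcost⟩

lemma diss (n m : ℕ)
    (A : Matrix (Fin n) (Fin n) ℝ) (B : Matrix (Fin n) (Fin m) ℝ)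
    (Q : Matrix (Fin n) (Fin n) ℝ) (R : Matrix (Fin m) (Fin m) ℝ)
    (hR : R.PosDef)
    (γf : ℝ)
    (P : Matrix (Fin n) (Fin n) ℝ) (hP : P.PosDef)
    (hγP : (γf ^ 2 • (1 : Matrix (Fin n) (Fin n) ℝ) - P).PosDef)
    (Pbar : Matrix (Fin n) (Fin n) ℝ)
    (hPbar : Pbar = P + P * (γf ^ 2 • (1 : Matrix (Fin n) (Fin n) ℝ) - P)⁻¹ * P)
    (hRic : P = Q + Aᵀ * Pbar * A -
      Aᵀ * Pbar * B * (R + Bᵀ * Pbar * B)⁻¹ * Bᵀ * Pbar * A)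
    (Kf : Matrix (Fin m) (Fin n) ℝ)
    (hKf : Kf = -((R + Bᵀ * Pbar * B)⁻¹ * Bᵀ * Pbar * A)) (x w : Fin n → ℝ) :
    x ⬝ᵥ (Q *ᵥ x) + (Kf *ᵥ x) ⬝ᵥ (R *ᵥ (Kf *ᵥ x)) +
      (A *ᵥ x + B *ᵥ (Kf *ᵥ x) + w) ⬝ᵥ (P *ᵥ (A *ᵥ x + B *ᵥ (Kf *ᵥ x) + w)) ≤
    x ⬝ᵥ (P *ᵥ x) + γf ^ 2 * (w ⬝ᵥ w) := by
  set N := γf ^ 2 • (1 : Matrix (Fin n) (Fin n) ℝ) - P with hN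
  have hPb : Pbar.PosSemidef := by
    rw [hPbar]
    refine hP.posSemidef.add ?_
    have := hγP.inv.posSemidef.conjTranspose_mul_mul_same P
    rwa [hP.1.eq] at this
  have hS : (R + Bᵀ * Pbar * B).PosDef := by
    refine hR.add_posSemidef ?_
    simpa [conjTranspose_eq_transpose_of_trivial] using hPb.conjTranspose_mul_mul_same B
  have hSu := (Matrix.isUnit_iff_isUnit_det _).1 hS.isUnit
  have hNu := (Matrix.isUnit_iff_isUnit_det _).1 hγP.isUnit
  set S := R + Bᵀ * Pbar * B with hSdef
  set u := Kf *ᵥ x with hu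
  have hSu' : R *ᵥ u + Bᵀ *ᵥ (Pbar *ᵥ (B *ᵥ u)) = -(Bᵀ *ᵥ (Pbar *ᵥ (A *ᵥ x))) := by
    have : S *ᵥ u = -(Bᵀ *ᵥ (Pbar *ᵥ (A *ᵥ x))) := by
      rw [hu, hKf]
      simp only [neg_mulVec, mulVec_neg, mulVec_mulVec]
      simp only [Matrix.mul_assoc]
      rw [← Matrix.mul_assoc S, mul_nonsing_inv _ hSu, Matrix.one_mul]
    rw [← this, hSdef]
    simp only [add_mulVec, ← mulVec_mulVec]
  have hu' : u = -(S⁻¹ *ᵥ (Bᵀ *ᵥ (Pbar *ᵥ (A *ᵥ x)))) := by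
    rw [hu, hKf]
    simp only [neg_mulVec, ← mulVec_mulVec]
  have e1 : x ⬝ᵥ (P *ᵥ x) = x ⬝ᵥ (Q *ᵥ x) + (A *ᵥ x) ⬝ᵥ (Pbar *ᵥ (A *ᵥ x)) +
      (B *ᵥ u) ⬝ᵥ (Pbar *ᵥ (A *ᵥ x)) := by
    have h3 : (B *ᵥ u) ⬝ᵥ (Pbar *ᵥ (A *ᵥ x)) = (A *ᵥ x) ⬝ᵥ (Pbar *ᵥ (B *ᵥ u)) :=
      quad_symm hPb.1 _ _
    rw [h3, hu']
    conv_lhs => rw [hRic]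
    simp only [Matrix.mul_assoc, add_mulVec, sub_mulVec, dotProduct_add, dotProduct_sub,
      ← mulVec_mulVec, mulVec_neg, dotProduct_neg]
    rw [dotProduct_mulVec x Aᵀ, dotProduct_mulVec x Aᵀ, vecMul_transpose]
    ring
  have e2 : u ⬝ᵥ (R *ᵥ u) + (B *ᵥ u) ⬝ᵥ (Pbar *ᵥ (B *ᵥ u)) = 
      - ((B *ᵥ u) ⬝ᵥ (Pbar *ᵥ (A *ᵥ x))) := by
    have := congrArg (fun z => u ⬝ᵥ z) hSu'
    simp only [dotProduct_add, dotProduct_neg] at this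
    rwa [dotProduct_mulVec u Bᵀ, dotProduct_mulVec u Bᵀ, vecMul_transpose] at this
  set y := A *ᵥ x + B *ᵥ u with hy
  have e3 : y ⬝ᵥ (Pbar *ᵥ y) = (A *ᵥ x) ⬝ᵥ (Pbar *ᵥ (A *ᵥ x)) +
      2 * ((B *ᵥ u) ⬝ᵥ (Pbar *ᵥ (A *ᵥ x))) + (B *ᵥ u) ⬝ᵥ (Pbar *ᵥ (B *ᵥ u)) := by
    have := quad_symm hPb.1 (A *ᵥ x) (B *ᵥ u)
    simp only [hy, mulVec_add, dotProduct_add, add_dotProduct]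
    linarith
  have e4 : (y + w) ⬝ᵥ (P *ᵥ (y + w)) ≤ y ⬝ᵥ (Pbar *ᵥ y) + γf ^ 2 * (w ⬝ᵥ w) := by
    set v := N⁻¹ *ᵥ (P *ᵥ y) with hv
    have hNv : N *ᵥ v = P *ᵥ y := by
      rw [hv, mulVec_mulVec, mul_nonsing_inv _ hNu, one_mulVec]
    have h5 := quad_nonneg hγP.posSemidef (v - w)
    have h6 : w ⬝ᵥ (N *ᵥ w) = γf ^ 2 * (w ⬝ᵥ w) - w ⬝ᵥ (P *ᵥ w) := by
      simp [hN, sub_mulVec, smul_mulVec]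
    have h7 := quad_symm hγP.1 v w
    have h8 := quad_symm hP.1 y w
    have h9 : y ⬝ᵥ (Pbar *ᵥ y) = y ⬝ᵥ (P *ᵥ y) + v ⬝ᵥ (P *ᵥ y) := by
      rw [hPbar, add_mulVec, dotProduct_add, ← mulVec_mulVec, ← mulVec_mulVec, ← hv,
        quad_symm hP.1 y v]
    simp only [mulVec_sub, mulVec_add, dotProduct_add, add_dotProduct, dotProduct_sub,
      sub_dotProduct] at h5 ⊢
    rw [hNv] at h5 h7
    linarith
  linarith

lemma C_mono (n m k : ℕ) (A : Matrix (Fin n) (Fin n) ℝ) (B : Matrix (Fin n) (Fin m) ℝ)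
    (Q : Matrix (Fin n) (Fin n) ℝ) (R : Matrix (Fin m) (Fin m) ℝ)
    (hQ : Q.PosSemidef) (hR : R.PosDef) (w w' : Fin (k+1) × Fin n → ℝ)
    (h0 : ∀ p, w' (0, p) = 0) (h1 : ∀ (i : Fin k) p, w' (i.succ, p) = w (i.castSucc, p)) :
    assemble n (k+1) 0 w' ⬝ᵥ (Cmat n m (k+1) A B Q R *ᵥ assemble n (k+1) 0 w') ≤
    assemble n (k+1) 0 w ⬝ᵥ (Cmat n m (k+1) A B Q R *ᵥ assemble n (k+1) 0 w) := by
  obtain ⟨x, u, hd, he, -⟩ := C_min n m (k+1) A B Q R hQ hR (assemble n (k+1) 0 w)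
  obtain ⟨-, -, -, -, hm⟩ := C_min n m (k+1) A B Q R hQ hR (assemble n (k+1) 0 w')
  let x' : SIdx n (k+1) → ℝ := fun q => Fin.cases 0 (fun i => x (i.castSucc, q.2)) q.1
  let u' : UIdx m (k+1) → ℝ := fun q => Fin.cases 0 (fun i : Fin k => u (i.castSucc, q.2)) q.1
  have x'0 : ∀ p, x' (0, p) = 0 := fun p => rfl
  have x's : ∀ i p, x' (Fin.succ i, p) = x (i.castSucc, p) := fun i p => rfl
  have u'0 : ∀ p, u' (0, p) = 0 := fun p => rfl
  have u's : ∀ (i : Fin k) p, u' (Fin.succ i, p) = u (i.castSucc, p) := fun i p => rfl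
  have hd' : Dyn n m (k+1) A B x' (assemble n (k+1) 0 w') u' := by
    refine ⟨fun p => by simp [x'0, asm_zero], fun t p => ?_⟩
    rw [asm_succ, x's]
    refine Fin.cases ?_ (fun i => ?_) t
    · have : (fun q => x' (0, q)) = 0 := by ext q; exact x'0 q
      have h2 : (fun q => u' (0, q)) = 0 := by ext q; exact u'0 q
      have := hd.1 p
      simp_all [asm_zero]
    · have := hd.2 i.castSucc p
      rw [asm_succ] at this
      rw [h1, ← Fin.succ_castSucc, this]
      simp only [u's, ← Fin.succ_castSucc, x's]
  refine (hm x' u' hd').trans ?_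
  rw [← he, quadQb, quadQb, quadR, quadR]
  rw [Fin.sum_univ_succ (n := k), Fin.sum_univ_succ (n := k), Fin.sum_univ_castSucc (n := k),
    Fin.sum_univ_castSucc (n := k)]
  simp only [← Fin.succ_castSucc, x's, u's, Fin.castSucc_zero, x'0, u'0]
  have a1 := quad_nonneg hQ (fun q => x ((Fin.last k).castSucc, q))
  have a2 := quad_nonneg hR.posSemidef (fun q => u ((Fin.last k), q))
  have z1 : (fun _ : Fin n => (0:ℝ)) = 0 := rfl
  have z2 : (fun _ : Fin m => (0:ℝ)) = 0 := rfl
  simp only [z1, z2, zero_dotProduct, zero_mulVec, dotProduct_zero]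
  linarith

lemma C_nonneg (n m T : ℕ) (A : Matrix (Fin n) (Fin n) ℝ) (B : Matrix (Fin n) (Fin m) ℝ)
    (Q : Matrix (Fin n) (Fin n) ℝ) (R : Matrix (Fin m) (Fin m) ℝ)
    (hQ : Q.PosSemidef) (hR : R.PosDef) (d : SIdx n T → ℝ) :
    0 ≤ d ⬝ᵥ (Cmat n m T A B Q R *ᵥ d) := by
  obtain ⟨x, u, -, he, -⟩ := C_min n m T A B Q R hQ hR d
  rw [← he]
  exact add_nonneg (quad_nonneg (bigQb_psd hQ .zero) _) (quad_nonneg (bigR_pd hR).posSemidef _)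

lemma dot_blocks (n T : ℕ) (w : Fin T × Fin n → ℝ) :
    w ⬝ᵥ w = ∑ t, (fun p => w (t, p)) ⬝ᵥ (fun p => w (t, p)) := by
  simp only [dotProduct, Fintype.sum_prod_type]

/-- terminal controller feasibility -/
lemma zero_feas (n m T : ℕ)
    (A : Matrix (Fin n) (Fin n) ℝ) (B : Matrix (Fin n) (Fin m) ℝ)
    (Q : Matrix (Fin n) (Fin n) ℝ) (R : Matrix (Fin m) (Fin m) ℝ)
    (hQ : Q.PosSemidef) (hR : R.PosDef) (γ : ℝ)
    (P : Matrix (Fin n) (Fin n) ℝ) (hP : P.PosDef)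
    (Kf : Matrix (Fin m) (Fin n) ℝ)
    (hdiss : ∀ x w : Fin n → ℝ, x ⬝ᵥ (Q *ᵥ x) + (Kf *ᵥ x) ⬝ᵥ (R *ᵥ (Kf *ᵥ x)) +
      (A *ᵥ x + B *ᵥ (Kf *ᵥ x) + w) ⬝ᵥ (P *ᵥ (A *ᵥ x + B *ᵥ (Kf *ᵥ x) + w)) ≤
      x ⬝ᵥ (P *ᵥ x) + γ ^ 2 * (w ⬝ᵥ w))
    (W : Set (Fin n → ℝ)) (Zc : Set ((Fin n → ℝ) × (Fin m → ℝ))) 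
    (Zf : Set (Fin n → ℝ)) 
    (hZfK : ∀ x ∈ Zf, (x, Kf *ᵥ x) ∈ Zc)
    (hZfInv : ∀ x ∈ Zf, ∀ w ∈ W, (A + B * Kf) *ᵥ x + w ∈ Zf)
    (hC : ((Cmat n m T A B Q R).submatrix
      (fun c : Fin T × Fin n => ((c.1.succ : Fin (T + 1)), c.2))
      (fun c : Fin T × Fin n => ((c.1.succ : Fin (T + 1)), c.2))).IsHermitian)
    (x0 : Fin n → ℝ) (hx0 : x0 ∈ Zf) :
    x0 ∈ Xset n m T A B Q R P W Zc Zf γ := by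
  let X := Matrix.mulVecLin (bigG n T (A + B * Kf))
  let U : (SIdx n T → ℝ) →ₗ[ℝ] (UIdx m T → ℝ) :=
    { toFun := fun d q => (Kf *ᵥ fun p => X d (q.1.castSucc, p)) q.2
      map_add' := by
        intro d e; ext q
        simp only [map_add, Pi.add_apply]
        rw [← Pi.add_apply, ← mulVec_add]; rfl
      map_smul' := by
        intro c d; ext q
        simp only [map_smul, Pi.smul_apply, RingHom.id_apply]
        rw [← Pi.smul_apply, ← mulVec_smul]; rfl }
  have hU : ∀ d t, (fun q => U d (t, q)) = Kf *ᵥ fun p => X d (t.castSucc, p) := fun d t => rfl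
  have hXd : ∀ d, Dyn n m T (A + B * Kf) 0 (X d) d 0 := by
    intro d
    rw [← FG_dyn]
    simp [X]
  have hX0 : ∀ d p, X d (0, p) = d (0, p) := fun d => (hXd d).1
  have hXs : ∀ d (t : Fin T), (fun p => X d (t.succ, p)) =
      A *ᵥ (fun p => X d (t.castSucc, p)) + B *ᵥ (Kf *ᵥ (fun p => X d (t.castSucc, p)))
        + (fun p => d (t.succ, p)) := by
    intro d t
    ext p
    rw [(hXd d).2 t p]
    simp [add_mulVec]
  have hcx : ∀ d (t : Fin (T+1)), (∀ (j : Fin (T+1)) p, (j : ℕ) ≤ t → d (j, p) = 0) →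
      ∀ p, X d (t, p) = 0 := by
    intro d t
    induction t using Fin.induction with
    | zero => intro h p; rw [hX0]; exact h 0 p (by simp)
    | succ t ih =>
      intro h p
      have ih' : (fun p => X d (t.castSucc, p)) = 0 := by
        ext p
        refine ih (fun j p hj => h j p ?_) p
        simp at hj ⊢; omega
      have := congrFun (hXs d t) p
      rw [ih'] at this
      simpa [h t.succ p le_rfl] using this
  refine memPi_intro n m T A B Q R P W Zc Zf γ x0 hQ hR hP X U hcx ?_ ?_ ?_ hC ?_
  · intro d t h p
    have : (fun p => X d (t.castSucc, p)) = 0 := by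
      ext p; exact hcx d t.castSucc h p
    have h2 := congrFun (hU d t) p
    rw [this] at h2
    simpa using h2
  · intro d
    refine ⟨hX0 d, fun t p => ?_⟩
    rw [hU]
    exact congrFun (hXs d t) p
  · intro w hw
    have key : ∀ t, (fun p => X (assemble n T x0 w) (t, p)) ∈ Zf := by
      intro t
      induction t using Fin.induction with
      | zero => simpa only [hX0, asm_zero] using hx0
      | succ t ih =>
        rw [hXs]
        have := hZfInv _ ih _ (hw t)
        simpa only [add_mulVec, ← mulVec_mulVec, asm_succ] using this
    refine ⟨fun t => ?_, key _⟩
    rw [hU]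
    exact hZfK _ (key _)
  · intro w
    refine le_trans ?_ (le_add_of_nonneg_right (C_nonneg n m T A B Q R hQ hR _))
    rw [quadQb, quadR, dot_blocks]
    simp only [hU]
    set d := assemble n T 0 w with hd
    have h1 := Finset.sum_le_sum (s := Finset.univ) fun (t : Fin T) _ =>
      hdiss (fun p => X d (t.castSucc, p)) (fun p => w (t, p))
    have h2 := fun t : Fin T => hXs d t
    simp only [hd, asm_succ] at h2
    simp only [← hd] at h2
    simp only [← h2, Finset.sum_add_distrib, ← Finset.mul_sum] at h1
    let f : Fin (T+1) → ℝ := fun t => (fun p => X d (t, p)) ⬝ᵥ (P *ᵥ fun p => X d (t, p))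
    have h3 : ∑ t : Fin T, f t.castSucc + f (Fin.last T) = f 0 + ∑ t : Fin T, f t.succ := by
      rw [← Fin.sum_univ_castSucc, Fin.sum_univ_succ]
    have h4 : f 0 = 0 := by
      have : (fun p => X d (0, p)) = 0 := by ext p; rw [hX0, hd, asm_zero]
      simp only [f, this]; simp
    simp only [f] at h3 h4
    linarith

lemma shift_feas (n m k : ℕ)
    (A : Matrix (Fin n) (Fin n) ℝ) (B : Matrix (Fin n) (Fin m) ℝ)
    (Q : Matrix (Fin n) (Fin n) ℝ) (R : Matrix (Fin m) (Fin m) ℝ)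
    (hQ : Q.PosSemidef) (hR : R.PosDef) (γ : ℝ)
    (P : Matrix (Fin n) (Fin n) ℝ) (hP : P.PosDef)
    (Kf : Matrix (Fin m) (Fin n) ℝ)
    (hdiss : ∀ x w : Fin n → ℝ, x ⬝ᵥ (Q *ᵥ x) + (Kf *ᵥ x) ⬝ᵥ (R *ᵥ (Kf *ᵥ x)) +
      (A *ᵥ x + B *ᵥ (Kf *ᵥ x) + w) ⬝ᵥ (P *ᵥ (A *ᵥ x + B *ᵥ (Kf *ᵥ x) + w)) ≤
      x ⬝ᵥ (P *ᵥ x) + γ ^ 2 * (w ⬝ᵥ w))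
    (W : Set (Fin n → ℝ)) (Zc : Set ((Fin n → ℝ) × (Fin m → ℝ))) 
    (Zf : Set (Fin n → ℝ)) 
    (hZfK : ∀ x ∈ Zf, (x, Kf *ᵥ x) ∈ Zc)
    (hZfInv : ∀ x ∈ Zf, ∀ w ∈ W, (A + B * Kf) *ᵥ x + w ∈ Zf)
    (x : Fin n → ℝ)
    (Φx : Matrix (SIdx n (k+1)) (SIdx n (k+1)) ℝ) (Φu : Matrix (UIdx m (k+1)) (SIdx n (k+1)) ℝ)
    (hmem : memPi n m (k+1) A B Q R P W Zc Zf γ x Φx Φu)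
    (u0 : Fin m → ℝ)
    (hu0 : u0 = fun i => ∑ j : Fin n, Φu (0, i) (0, j) * x j)
    (w : Fin n → ℝ) (hw : w ∈ W) (hne : A *ᵥ x + B *ᵥ u0 + w ≠ 0) :
    A *ᵥ x + B *ᵥ u0 + w ∈ Xset n m (k+1) A B Q R P W Zc Zf γ := by
  obtain ⟨⟨hcx, hcu⟩, hach, hsafe, hlmi⟩ := hmem
  rw [ach_iff] at hach
  obtain ⟨hC, hcost⟩ := (lmi_iff _ _ _ _ _ _ _ _ _ hQ hR hP _ _).1 hlmi
  set y := A *ᵥ x + B *ᵥ u0 with hy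
  set xp := y + w with hxp
  have hxp0 : xp ⬝ᵥ xp ≠ 0 := by simpa using hne
  -- the linear functional
  let l : (SIdx n (k+1) → ℝ) →ₗ[ℝ] ℝ :=
    { toFun := fun d => (xp ⬝ᵥ fun p => d (0, p)) / (xp ⬝ᵥ xp)
      map_add' := by
        intro d e
        rw [← add_div, ← dotProduct_add]; rfl
      map_smul' := by
        intro c d
        rw [RingHom.id_apply, smul_eq_mul, ← mul_div_assoc, ← smul_eq_mul, ← dotProduct_smul]; rfl }
  have hl : ∀ d, l d = (xp ⬝ᵥ fun p => d (0, p)) / (xp ⬝ᵥ xp) := fun d => rfl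
  have hl0 : ∀ d : SIdx n (k+1) → ℝ, (∀ p, d (0, p) = 0) → l d = 0 := by
    intro d h; rw [hl]; simp [dotProduct, h]
  let L : (SIdx n (k+1) → ℝ) →ₗ[ℝ] (SIdx n (k+1) → ℝ) :=
    { toFun := fun d q => Fin.cases (l d * x q.2)
        (fun i => d (i.castSucc, q.2) - if i = 0 then l d * y q.2 else 0) q.1
      map_add' := by
        intro d e; ext ⟨t, p⟩
        refine Fin.cases ?_ (fun i => ?_) t
        · simp [add_mul]
        · simp only [Fin.cases_succ, Pi.add_apply, map_add]
          split_ifs <;> ring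
      map_smul' := by
        intro c d; ext ⟨t, p⟩
        refine Fin.cases ?_ (fun i => ?_) t
        · simp [mul_assoc]
        · simp only [Fin.cases_succ, Pi.smul_apply, map_smul, smul_eq_mul, RingHom.id_apply]
          split_ifs <;> ring }
  have L0 : ∀ d p, L d (0, p) = l d * x p := fun d p => rfl
  have Ls : ∀ d (i : Fin (k+1)) p, L d (i.succ, p) =
    d (i.castSucc, p) - if i = 0 then l d * y p else 0 := fun d i p => rfl
  let XL := (Matrix.mulVecLin Φx) ∘ₗ L
  let UL := (Matrix.mulVecLin Φu) ∘ₗ L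
  have hLd : ∀ d, Dyn n m (k+1) A B (XL d) (L d) (UL d) := fun d => hach (L d)
  have hUL0 : ∀ d, (fun q => UL d (0, q)) = l d • u0 := by
    intro d
    ext q
    simp only [UL, LinearMap.comp_apply, mulVecLin_apply, mulVec, dotProduct,
      Fintype.sum_prod_type]
    rw [Fin.sum_univ_succ]
    have : ∀ (i : Fin (k+1)) p, Φu (0, q) (i.succ, p) = 0 := fun i p => hcu _ _ (by simp)
    simp only [this, L0, hu0, Pi.smul_apply, smul_eq_mul, Finset.mul_sum]
    simp only [zero_mul, Finset.sum_const_zero, add_zero]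
    exact Finset.sum_congr rfl fun j _ => by ring
  have hXL1 : ∀ d p, XL d (Fin.succ 0, p) = d (0, p) := by
    intro d p
    rw [(hLd d).2 0 p, hUL0, Ls]
    have : (fun q => XL d (Fin.castSucc 0, q)) = l d • x := by
      ext q; exact ((hLd d).1 q).trans (L0 d q)
    rw [this, mulVec_smul, mulVec_smul]
    simp [hy]; ring
  let X : (SIdx n (k+1) → ℝ) →ₗ[ℝ] (SIdx n (k+1) → ℝ) :=
    { toFun := fun d q => Fin.lastCases
        ((A *ᵥ (fun p => XL d (Fin.last (k+1), p)) +
          B *ᵥ (Kf *ᵥ (fun p => XL d (Fin.last (k+1), p)))) q.2 + d (Fin.last (k+1), q.2))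
        (fun i => XL d (i.succ, q.2)) q.1
      map_add' := by
        intro d e; ext ⟨t, p⟩
        refine Fin.lastCases ?_ (fun i => ?_) t
        · have : (fun p => XL (d + e) (Fin.last (k+1), p)) = (fun p => XL d (Fin.last (k+1), p)) +
            (fun p => XL e (Fin.last (k+1), p)) := by rw [map_add]; rfl
          simp only [this, mulVec_add, Fin.lastCases_last, Pi.add_apply]; ring
        · simp
      map_smul' := by
        intro c d; ext ⟨t, p⟩
        refine Fin.lastCases ?_ (fun i => ?_) t
        · have : (fun p => XL (c • d) (Fin.last (k+1), p)) =
            c • (fun p => XL d (Fin.last (k+1), p)) := by rw [map_smul]; rfl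
          simp only [this, mulVec_smul, Fin.lastCases_last, Pi.add_apply, Pi.smul_apply,
            smul_eq_mul, RingHom.id_apply]; ring
        · simp }
  let U : (SIdx n (k+1) → ℝ) →ₗ[ℝ] (UIdx m (k+1) → ℝ) :=
    { toFun := fun d q => Fin.lastCases
        ((Kf *ᵥ (fun p => XL d (Fin.last (k+1), p))) q.2)
        (fun i : Fin k => UL d (i.succ, q.2)) q.1
      map_add' := by
        intro d e; ext ⟨t, p⟩
        refine Fin.lastCases ?_ (fun i => ?_) t
        · have : (fun p => XL (d + e) (Fin.last (k+1), p)) = (fun p => XL d (Fin.last (k+1), p)) +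
            (fun p => XL e (Fin.last (k+1), p)) := by rw [map_add]; rfl
          simp only [this, mulVec_add, Fin.lastCases_last, Pi.add_apply]
        · simp
      map_smul' := by
        intro c d; ext ⟨t, p⟩
        refine Fin.lastCases ?_ (fun i => ?_) t
        · have : (fun p => XL (c • d) (Fin.last (k+1), p)) =
            c • (fun p => XL d (Fin.last (k+1), p)) := by rw [map_smul]; rfl
          simp only [this, mulVec_smul, Fin.lastCases_last, Pi.smul_apply,
            smul_eq_mul, RingHom.id_apply]
        · simp }
  have hXc : ∀ d (i : Fin (k+1)) p, X d (i.castSucc, p) = XL d (i.succ, p) := by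
    intro d i p; simp [X]
  have hXl : ∀ d, (fun p => X d (Fin.last (k+1), p)) = 
      A *ᵥ (fun p => XL d (Fin.last (k+1), p)) +
          B *ᵥ (Kf *ᵥ (fun p => XL d (Fin.last (k+1), p))) +
          (fun p => d (Fin.last (k+1), p)) := by
    intro d; ext p; simp [X]
  have hUc : ∀ d (i : Fin k) p, U d (i.castSucc, p) = UL d (i.succ, p) := by
    intro d i p; simp [U]
  have hUl : ∀ d, (fun p => U d (Fin.last k, p)) =
      Kf *ᵥ (fun p => XL d (Fin.last (k+1), p)) := by
    intro d; ext p; simp [U]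
  -- causality of L
  have hLc : ∀ d (t : Fin (k+1)), (∀ (j : Fin (k+2)) p, (j : ℕ) ≤ t → d (j, p) = 0) →
      ∀ (j : Fin (k+2)) p, (j : ℕ) ≤ t.succ → L d (j, p) = 0 := by
    intro d t h j p
    have hl0' := hl0 d (fun p => h 0 p (by simp))
    refine Fin.cases ?_ (fun i => ?_) j
    · intro _; rw [L0, hl0', zero_mul]
    · intro hj
      rw [Ls, hl0', h i.castSucc p (by simpa using hj)]
      simp
  have hXLc : ∀ d (t : Fin (k+1)), (∀ (j : Fin (k+2)) p, (j : ℕ) ≤ t → d (j, p) = 0) →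
      ∀ p, XL d (t.succ, p) = 0 := by
    intro d t h p
    simp only [XL, LinearMap.comp_apply, mulVecLin_apply, mulVec, dotProduct]
    refine Finset.sum_eq_zero fun q _ => ?_
    by_cases hq : (q.1 : ℕ) ≤ t.succ
    · rw [show L d q = 0 from hLc d t h q.1 q.2 hq, mul_zero]
    · rw [hcx _ _ (by simpa using hq), zero_mul]
  have hULc : ∀ d (t : Fin k), (∀ (j : Fin (k+2)) p, (j : ℕ) ≤ t → d (j, p) = 0) →
      ∀ p, UL d (t.succ, p) = 0 := by
    intro d t h p
    simp only [UL, LinearMap.comp_apply, mulVecLin_apply, mulVec, dotProduct]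
    refine Finset.sum_eq_zero fun q _ => ?_
    by_cases hq : (q.1 : ℕ) ≤ t.succ
    · rw [show L d q = 0 from hLc d t.castSucc h q.1 q.2 hq, mul_zero]
    · rw [hcu _ _ (by simpa using hq), zero_mul]
  have hXLl : ∀ d, (∀ (j : Fin (k+2)) p, (j : ℕ) ≤ k → d (j, p) = 0) →
      (fun p => XL d (Fin.last (k+1), p)) = 0 := by
    intro d h
    ext p
    exact hXLc d (Fin.last k) h p
  refine memPi_intro n m (k+1) A B Q R P W Zc Zf γ xp hQ hR hP X U ?_ ?_ ?_ ?_ hC ?_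
  · intro d t
    refine Fin.lastCases ?_ (fun i => ?_) t
    · intro h p
      have := congrFun (hXl d) p
      rw [hXLl d (fun j p hj => h j p (by simp; omega))] at this
      simpa [h (Fin.last (k+1)) p le_rfl] using this
    · intro h p
      rw [hXc]
      exact hXLc d i h p
  · intro d t
    refine Fin.lastCases ?_ (fun i => ?_) t
    · intro h p
      have := congrFun (hUl d) p
      rw [hXLl d (fun j p hj => h j p (by simpa using hj))] at this
      simpa using this
    · intro h p
      rw [hUc]
      exact hULc d i h p
  · intro d
    refine ⟨fun p => ?_, fun t => ?_⟩
    · rw [← Fin.castSucc_zero, hXc, hXL1]; rfl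
    · refine Fin.lastCases ?_ (fun i => ?_) t
      · intro p
        rw [hUl]
        simp only [hXc]
        exact congrFun (hXl d) p
      · intro p
        simp only [Fin.succ_castSucc, hXc, hUc]
        rw [(hLd d).2 i.succ p, Ls, if_neg (Fin.succ_ne_zero i), sub_zero]
  · intro w' hw'
    set d := assemble n (k+1) xp w' with hd
    let wo : Fin (k+1) × Fin n → ℝ :=
      fun q => Fin.cases (w q.2) (fun i : Fin k => w' (i.castSucc, q.2)) q.1
    have hld : l d = 1 := by
      rw [hl]
      have : (fun p => d (0, p)) = xp := by ext p; rw [hd, asm_zero]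
      rw [this, div_self hxp0]
    have hLd : L d = assemble n (k+1) x wo := by
      ext ⟨t, p⟩
      refine Fin.cases ?_ (fun i => ?_) t
      · rw [L0, asm_zero, hld, one_mul]
      · rw [Ls, asm_succ, hld]
        refine Fin.cases ?_ (fun i => ?_) i
        · simp [wo, hd, asm_zero, hxp]
        · rw [← Fin.succ_castSucc, hd, asm_succ]
          simp [wo]
    have hs := hsafe wo (by
      intro t
      refine Fin.cases ?_ (fun i => ?_) t
      · exact hw
      · exact hw' i.castSucc)
    rw [← hLd] at hs
    have hXf : (fun p => XL d (Fin.last (k+1), p)) ∈ Zf := hs.2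
    refine ⟨fun t => ?_, ?_⟩
    · refine Fin.lastCases ?_ (fun i => ?_) t
      · rw [hUl]
        simp only [hXc]
        exact hZfK _ hXf
      · simp only [hXc, hUc]
        exact hs.1 i.succ
    · rw [hXl]
      have := hZfInv _ hXf _ (hw' (Fin.last k))
      rw [add_mulVec, ← mulVec_mulVec] at this
      convert this using 2
      ext p; rw [hd, ← Fin.succ_last, asm_succ]
  · intro w'
    set d := assemble n (k+1) 0 w' with hd
    let wo : Fin (k+1) × Fin n → ℝ :=
      fun q => Fin.cases 0 (fun i : Fin k => w' (i.castSucc, q.2)) q.1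
    have hld : l d = 0 := hl0 d fun p => by rw [hd, asm_zero]; rfl
    have hLd : L d = assemble n (k+1) 0 wo := by
      ext ⟨t, p⟩
      refine Fin.cases ?_ (fun i => ?_) t
      · rw [L0, asm_zero, hld, zero_mul]; rfl
      · rw [Ls, asm_succ, hld]
        refine Fin.cases ?_ (fun i => ?_) i
        · simp [wo, hd, asm_zero]
        · rw [← Fin.succ_castSucc, hd, asm_succ]
          simp [wo]
    have h1 := hcost wo
    have h2 := C_mono n m k A B Q R hQ hR w' wo (fun p => rfl) (fun i p => rfl)
    rw [← hLd] at h1 h2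
    change (XL d) ⬝ᵥ (_ *ᵥ (XL d)) + (UL d) ⬝ᵥ (_ *ᵥ (UL d)) ≤ _ at h1
    have h3 := hdiss (fun p => XL d (Fin.last (k+1), p)) (fun p => d (Fin.last (k+1), p))
    rw [← hXl] at h3
    have h4 : (fun p => d (Fin.last (k+1), p)) = fun p => w' (Fin.last k, p) := by
      ext p; rw [hd, ← Fin.succ_last, asm_succ]
    rw [h4] at h3
    rw [quadQb, quadR, dot_blocks] at h1 ⊢
    rw [Fin.sum_univ_succ (n := k), Fin.sum_univ_succ (n := k), Fin.sum_univ_succ (n := k)] at h1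
    rw [Fin.sum_univ_castSucc (n := k), Fin.sum_univ_castSucc (n := k),
      Fin.sum_univ_castSucc (n := k)]
    simp only [hXc, hUc, hUl]
    have h5 := quad_nonneg hQ (fun p => XL d (Fin.castSucc 0, p))
    have h6 := quad_nonneg hR.posSemidef (fun p => UL d (0, p))
    have h7 : (fun p => wo (0, p)) ⬝ᵥ (fun p => wo (0, p)) = 0 := by simp [wo, dotProduct]
    have h8 : ∀ (i : Fin k), (fun p => wo (i.succ, p)) = fun p => w' (i.castSucc, p) :=
      fun i => rfl
    simp only [h7, h8, ← Fin.succ_castSucc] at h1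
    simp only [← Fin.succ_last] at h1 h3 ⊢
    linarith

end helpers

/-- Theorem 1 (robust positive invariance of the feasible set): for every `γ ≥ γ_f`,
every `x ∈ X_T^γ`, every admissible pair in `Π_T^γ(x)` with first control action
`u₀ = Φu^{[0,0]} x`, and every `w ∈ 𝒲`, the successor state `Ax + Bu₀ + w` lies in
`X_T^γ`. -/
theorem stmt18 (n m : ℕ) (hn : 0 < n) (hm : 0 < m)
    (A : Matrix (Fin n) (Fin n) ℝ) (B : Matrix (Fin n) (Fin m) ℝ)
    (Q : Matrix (Fin n) (Fin n) ℝ) (R : Matrix (Fin m) (Fin m) ℝ)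
    (hQ : Q.PosSemidef) (hR : R.PosDef)
    (γf : ℝ) (hγf : 0 < γf)
    (P : Matrix (Fin n) (Fin n) ℝ) (hP : P.PosDef)
    (hγP : (γf ^ 2 • (1 : Matrix (Fin n) (Fin n) ℝ) - P).PosDef)
    (Pbar : Matrix (Fin n) (Fin n) ℝ)
    (hPbar : Pbar = P + P * (γf ^ 2 • (1 : Matrix (Fin n) (Fin n) ℝ) - P)⁻¹ * P)
    (hRic : P = Q + Aᵀ * Pbar * A -
      Aᵀ * Pbar * B * (R + Bᵀ * Pbar * B)⁻¹ * Bᵀ * Pbar * A)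
    (Kf : Matrix (Fin m) (Fin n) ℝ)
    (hKf : Kf = -((R + Bᵀ * Pbar * B)⁻¹ * Bᵀ * Pbar * A))
    (W : Set (Fin n → ℝ)) (hWconv : Convex ℝ W) (hWcomp : IsCompact W)
    (hW0 : (0 : Fin n → ℝ) ∈ interior W)
    (Zc : Set ((Fin n → ℝ) × (Fin m → ℝ))) (hZcl : IsClosed Zc) (hZconv : Convex ℝ Zc)
    (hZ0 : ((0 : Fin n → ℝ), (0 : Fin m → ℝ)) ∈ interior Zc)
    (Zf : Set (Fin n → ℝ)) (hZfcl : IsClosed Zf) (hZfconv : Convex ℝ Zf)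
    (hZf0 : (0 : Fin n → ℝ) ∈ interior Zf)
    (hZfK : ∀ x ∈ Zf, (x, Kf *ᵥ x) ∈ Zc)
    (hZfInv : ∀ x ∈ Zf, ∀ w ∈ W, (A + B * Kf) *ᵥ x + w ∈ Zf)
    (T : ℕ) (hT : 1 ≤ T)
    (γ : ℝ) (hγ : γf ≤ γ)
    (x : Fin n → ℝ)
    (Φx : Matrix (SIdx n T) (SIdx n T) ℝ) (Φu : Matrix (UIdx m T) (SIdx n T) ℝ)
    (hmem : memPi n m T A B Q R P W Zc Zf γ x Φx Φu)
    (u0 : Fin m → ℝ)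
    (hu0 : u0 = fun i => ∑ j : Fin n,
      Φu ((⟨0, by omega⟩ : Fin T), i) ((0 : Fin (T + 1)), j) * x j)
    (w : Fin n → ℝ) (hw : w ∈ W) :
    A *ᵥ x + B *ᵥ u0 + w ∈ Xset n m T A B Q R P W Zc Zf γ := by
  obtain ⟨k, rfl⟩ : ∃ k, T = k + 1 := ⟨T - 1, by omega⟩
  have hdiss : ∀ x w : Fin n → ℝ, x ⬝ᵥ (Q *ᵥ x) + (Kf *ᵥ x) ⬝ᵥ (R *ᵥ (Kf *ᵥ x)) +
      (A *ᵥ x + B *ᵥ (Kf *ᵥ x) + w) ⬝ᵥ (P *ᵥ (A *ᵥ x + B *ᵥ (Kf *ᵥ x) + w)) ≤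
      x ⬝ᵥ (P *ᵥ x) + γ ^ 2 * (w ⬝ᵥ w) := by
    intro x w
    refine (diss n m A B Q R hR γf P hP hγP Pbar hPbar hRic Kf hKf x w).trans ?_
    have h1 : 0 ≤ w ⬝ᵥ w := by
      simp only [dotProduct]
      exact Finset.sum_nonneg fun i _ => mul_self_nonneg _
    have h2 : γf ^ 2 ≤ γ ^ 2 := pow_le_pow_left₀ hγf.le hγ 2
    have := mul_le_mul_of_nonneg_right h2 h1
    linarith
  by_cases hne : A *ᵥ x + B *ᵥ u0 + w = 0
  · have hC := ((lmi_iff _ _ _ _ _ _ _ _ _ hQ hR hP _ _).1 hmem.2.2.2).1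
    rw [hne]
    exact zero_feas n m (k+1) A B Q R hQ hR γ P hP Kf hdiss W Zc Zf hZfK hZfInv hC 0
      (interior_subset hZf0)
  · exact shift_feas n m k A B Q R hQ hR γ P hP Kf hdiss W Zc Zf hZfK hZfInv x Φx Φu hmem u0
      hu0 w hw hne

end
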